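/- For n ≤ 5, Problem I has no solutions: there are no positive integers a_1, ..., a_n with n ≤ 5 such that M(a_1, ..., a_n) = Id. For n = 6, Problem I has the unique solution (1, 1, 1, 1, 1, 1): for positive integers a_1, ..., a_6, one has M(a_1, ..., a_6) = Id if and only if a_1 = a_2 = ⋯ = a_6 = 1. -/

import Mathlib

open Matrix

def elemMat (a : ℤ) : Matrix (Fin 2) (Fin 2) ℤ := !![a, -1; 1, 0]

/-- `M (a₁ :: ... :: aₙ)` is the product `E(aₙ) ⋯ E(a₁)` with the factor for `a₁` rightmost. -/
def M : List ℤ → Matrix (Fin 2) (Fin 2) ℤ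
  | [] => 1
  | a :: t => M t * elemMat a

/-!
If `M (l₁ ++ l₂) = M l₂ * M l₁` is the identity, then `M l₂` is the adjugate of `M l₁`, because both
have determinant one; in particular their lower left entries add up to zero. For positive lists of
length `0`, `1`, `2`, `3` the lower left entry is `0`, `1`, `a`, `a * b - 1`, hence nonnegative, and
positive for lengths one and two. Cutting a list of length at most five after its second term is
therefore contradictory. Cutting a solution of length six in the middle forces `a * b = 1`, and as
cyclic rotations of solutions are solutions, all its terms are equal to one.
-/

lemma M_append (l₁ l₂ : List ℤ) : M (l₁ ++ l₂) = M l₂ * M l₁ := by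
  induction l₁ with
  | nil => simp [M]
  | cons a l ih => rw [List.cons_append, M, M, ih, Matrix.mul_assoc]

lemma M_append_eq_one_comm {l₁ l₂ : List ℤ} : M (l₁ ++ l₂) = 1 ↔ M (l₂ ++ l₁) = 1 := by
  rw [M_append, M_append, mul_eq_one_comm]

lemma det_elemMat (a : ℤ) : (elemMat a).det = 1 := by
  simp [elemMat, det_fin_two]

lemma det_M (l : List ℤ) : (M l).det = 1 := by
  induction l with
  | nil => exact det_one
  | cons a l ih => rw [M, det_mul, ih, det_elemMat, one_mul]

lemma M_eq_adjugate_of_append_eq_one {l₁ l₂ : List ℤ} (h : M (l₁ ++ l₂) = 1) :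
    M l₂ = (M l₁).adjugate := by
  rw [M_append] at h
  rw [← inv_eq_left_inv h, inv_def, det_M, Ring.inverse_one, one_smul]

lemma M_one_zero_add_of_append_eq_one {l₁ l₂ : List ℤ} (h : M (l₁ ++ l₂) = 1) :
    M l₁ 1 0 + M l₂ 1 0 = 0 := by
  simp [M_eq_adjugate_of_append_eq_one h, adjugate_fin_two]

lemma M_singleton_one_zero (a : ℤ) : M [a] 1 0 = 1 := by
  simp [M, elemMat]

lemma M_pair_one_zero (a b : ℤ) : M [a, b] 1 0 = a := by
  simp [M, elemMat]

lemma M_triple_one_zero (a b c : ℤ) : M [a, b, c] 1 0 = a * b - 1 := by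
  simp [M, elemMat, ← sub_eq_add_neg, mul_comm]

lemma M_one_zero_pos {l : List ℤ} (hne : l ≠ []) (hlen : l.length ≤ 2) (hpos : ∀ x ∈ l, 0 < x) :
    0 < M l 1 0 := by
  match l with
  | [a] => simp [M_singleton_one_zero]
  | [a, b] => simpa [M_pair_one_zero] using hpos a (by simp)

lemma M_one_zero_nonneg {l : List ℤ} (hlen : l.length ≤ 3) (hpos : ∀ x ∈ l, 0 < x) :
    0 ≤ M l 1 0 := by
  match l with
  | [] => simp [M]
  | [a] => exact (M_one_zero_pos (by simp) (by simp) hpos).le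
  | [a, b] => exact (M_one_zero_pos (by simp) (by simp) hpos).le
  | [a, b, c] =>
    have hab : 0 < a * b := mul_pos (hpos a (by simp)) (hpos b (by simp))
    rw [M_triple_one_zero]
    lia

lemma M_ne_one_of_length_le_five {l : List ℤ} (hne : l ≠ []) (hlen : l.length ≤ 5)
    (hpos : ∀ x ∈ l, 0 < x) : M l ≠ 1 := by
  intro h
  have hsum : M (l.take 2) 1 0 + M (l.drop 2) 1 0 = 0 :=
    M_one_zero_add_of_append_eq_one (by rwa [List.take_append_drop])
  have htake : 0 < M (l.take 2) 1 0 :=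
    M_one_zero_pos (by simpa using hne) (List.length_take_le 2 l)
      fun x hx ↦ hpos x (List.mem_of_mem_take hx)
  have hdrop : 0 ≤ M (l.drop 2) 1 0 :=
    M_one_zero_nonneg (by rw [List.length_drop]; lia) fun x hx ↦ hpos x (List.mem_of_mem_drop hx)
  lia

lemma eq_one_of_M_cons_cons_cons_eq_one {a b c : ℤ} {l : List ℤ} (ha : 0 < a) (hb : 0 < b)
    (hlen : l.length ≤ 3) (hpos : ∀ x ∈ l, 0 < x) (h : M (a :: b :: c :: l) = 1) : a = 1 := by
  have hsum : a * b - 1 + M l 1 0 = 0 :=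
    M_triple_one_zero a b c ▸ M_one_zero_add_of_append_eq_one (l₁ := [a, b, c]) h
  have hl : 0 ≤ M l 1 0 := M_one_zero_nonneg hlen hpos
  have hab : a * b = 1 := by linarith [mul_pos ha hb]
  exact Int.eq_one_of_mul_eq_one_right ha.le hab

lemma forall_mem_eq_one_of_M_eq_one {l : List ℤ} (hlen : l.length = 6) (hpos : ∀ x ∈ l, 0 < x)
    (h : M l = 1) : ∀ x ∈ l, x = 1 := by
  intro x hx
  obtain ⟨s, t, rfl⟩ := List.append_of_mem hx
  have hrot : M (x :: (t ++ s)) = 1 := M_append_eq_one_comm.mp h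
  have hrot_pos : ∀ y ∈ x :: (t ++ s), 0 < y := fun y hy ↦ hpos y (by grind)
  have hrot_len : (t ++ s).length = 5 := by grind
  match t ++ s, hrot, hrot_pos, hrot_len with
  | b :: _ :: r, hrot, hrot_pos, hrot_len =>
    have hr : ∀ y ∈ r, 0 < y := fun y hy ↦ hrot_pos y (by simp [hy])
    exact eq_one_of_M_cons_cons_cons_eq_one (hpos x hx) (hrot_pos b (by simp)) (by grind) hr hrot

lemma M_one_one_one : M [1, 1, 1] = -1 := by
  decide

lemma M_six_ones : M [1, 1, 1, 1, 1, 1] = 1 :=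
  calc
    M ([1, 1, 1] ++ [1, 1, 1]) = M [1, 1, 1] * M [1, 1, 1] := M_append _ _
    _ = 1 := by rw [M_one_one_one, neg_mul_neg, one_mul]

/-- Problem I has no solutions for `n ≤ 5`, and for `n = 6` its unique solution is
`(1,1,1,1,1,1)`. -/
theorem problemI_small_n :
    (∀ l : List ℤ, l ≠ [] → l.length ≤ 5 → (∀ x ∈ l, 0 < x) → M l ≠ 1) ∧
    (∀ a1 a2 a3 a4 a5 a6 : ℤ,
      0 < a1 → 0 < a2 → 0 < a3 → 0 < a4 → 0 < a5 → 0 < a6 →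
      (M [a1, a2, a3, a4, a5, a6] = 1 ↔
        a1 = 1 ∧ a2 = 1 ∧ a3 = 1 ∧ a4 = 1 ∧ a5 = 1 ∧ a6 = 1)) := by
  refine ⟨fun l ↦ M_ne_one_of_length_le_five, fun a1 a2 a3 a4 a5 a6 h1 h2 h3 h4 h5 h6 ↦ ⟨?_, ?_⟩⟩
  · intro h
    have hpos : ∀ x ∈ [a1, a2, a3, a4, a5, a6], 0 < x := by simp [*]
    simpa using forall_mem_eq_one_of_M_eq_one rfl hpos h
  · rintro ⟨rfl, rfl, rfl, rfl, rfl, rfl⟩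
    exact M_six_ones
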